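/- Let S be a countably based, inf-semilattice ordered Cu-semigroup satisfying (O5). Let x, y, z ∈ S and let n ≥ 1 be a natural number. If λ(z) ≤ n·λ(x) and λ(z) ≤ n·λ(y) for every functional λ on S, then λ(z) ≤ n·λ(x ∧ y) for every functional λ on S. (This expresses that the rank map x ↦ (λ ↦ λ(x)) preserves binary infima.) -/

import Mathlib

/-- The way-below (compact containment) relation on a partially ordered set:
`WayBelow x y` holds if whenever `(y n)` is an increasing sequence admitting a
supremum `s` with `y ≤ s`, then `x ≤ y n` for some `n`. -/
def WayBelow {S : Type*} [PartialOrder S] (x y : S) : Prop :=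
  ∀ f : ℕ → S, Monotone f → ∀ s : S, IsLUB (Set.range f) s → y ≤ s → ∃ n, x ≤ f n

/-- An abstract Cuntz semigroup (Cu-semigroup): a positively ordered commutative
monoid satisfying the axioms (O1)-(O4). -/
class CuSemigroup (S : Type*) [AddCommMonoid S] [PartialOrder S] : Prop where
  /-- The order is positive. -/
  zero_le : ∀ x : S, 0 ≤ x
  /-- Addition is order-preserving. -/
  add_le_add : ∀ {x y z w : S}, x ≤ y → z ≤ w → x + z ≤ y + w
  /-- (O1): every increasing sequence has a supremum. -/
  O1 : ∀ f : ℕ → S, Monotone f → ∃ s : S, IsLUB (Set.range f) s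
  /-- (O2): every element is the supremum of a `≪`-increasing sequence. -/
  O2 : ∀ x : S, ∃ f : ℕ → S, (∀ n, WayBelow (f n) (f (n + 1))) ∧ IsLUB (Set.range f) x
  /-- (O3): the way-below relation is additive. -/
  O3 : ∀ {x' x y' y : S}, WayBelow x' x → WayBelow y' y → WayBelow (x' + y') (x + y)
  /-- (O4): addition is compatible with suprema of increasing sequences. -/
  O4 : ∀ (f g : ℕ → S), Monotone f → Monotone g → ∀ a b : S,
        IsLUB (Set.range f) a → IsLUB (Set.range g) b →
        IsLUB (Set.range fun n => f n + g n) (a + b)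

/-- Axiom (O5) (almost algebraic order). -/
def O5 (S : Type*) [AddCommMonoid S] [PartialOrder S] : Prop :=
  ∀ x' x z : S, WayBelow x' x → x ≤ z → ∃ w : S, x' + w ≤ z ∧ z ≤ x + w

/-- Axiom (O6+). -/
def O6plus (S : Type*) [AddCommMonoid S] [PartialOrder S] : Prop :=
  ∀ a b c x' x y' y : S, a ≤ b + c →
    WayBelow x' x → x ≤ a → x ≤ b → WayBelow y' y → y ≤ a → y ≤ c →
    ∃ e f : S, a ≤ e + f ∧ WayBelow x' e ∧ e ≤ a ∧ e ≤ b ∧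
      WayBelow y' f ∧ f ≤ a ∧ f ≤ c

/-- Weak cancellation: `x + z ≪ y + z` implies `x ≪ y`. -/
def WeakCancel (S : Type*) [AddCommMonoid S] [PartialOrder S] : Prop :=
  ∀ x y z : S, WayBelow (x + z) (y + z) → WayBelow x y

/-- A Cu-semigroup is countably based if there is a countable subset `B` such that every
element is the supremum of a `≪`-increasing sequence with elements in `B`. -/
def CountablyBased (S : Type*) [AddCommMonoid S] [PartialOrder S] : Prop :=
  ∃ B : Set S, B.Countable ∧ ∀ x : S, ∃ f : ℕ → S, (∀ n, f n ∈ B) ∧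
    (∀ n, WayBelow (f n) (f (n + 1))) ∧ IsLUB (Set.range f) x

/-- Addition distributes over the infimum operation. -/
def InfDistrib (S : Type*) [AddCommMonoid S] [SemilatticeInf S] : Prop :=
  ∀ x y z : S, (x + z) ⊓ (y + z) = (x ⊓ y) + z

/-- A functional on an ordered monoid: a `[0,∞]`-valued map preserving `0`, addition,
order, and suprema of increasing sequences. -/
def IsFunctional {S : Type*} [AddCommMonoid S] [PartialOrder S] (l : S → ENNReal) : Prop :=
  l 0 = 0 ∧ (∀ x y : S, l (x + y) = l x + l y) ∧ (∀ x y : S, x ≤ y → l x ≤ l y) ∧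
    ∀ (f : ℕ → S) (s : S), Monotone f → IsLUB (Set.range f) s → l s = ⨆ n, l (f n)

/-- An element is soft if each of its way-below approximants `x'` satisfies
`(k+1)·x' ≤ k·x` for some `k`. -/
def Soft {S : Type*} [AddCommMonoid S] [PartialOrder S] (x : S) : Prop :=
  ∀ x' : S, WayBelow x' x → ∃ k : ℕ, (k + 1) • x' ≤ k • x

/-- An element `x` is full if `∞·x = sup_n n·x` exists and dominates every element. -/
def IsFull {S : Type*} [AddCommMonoid S] [PartialOrder S] (x : S) : Prop :=
  ∃ s : S, IsLUB (Set.range fun n : ℕ => n • x) s ∧ ∀ t : S, t ≤ s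

/-!
Evaluating functionals at elements way below `z` lets one replace functionals by additive,
order-preserving maps `l : S →+o ℝ≥0∞`, with no continuity required. When `l (x ⊓ y)` is finite,
such an `l` splits as `m + p` with `m x + p y ≤ l (x ⊓ y)`, as in the Riesz–Kantorovich formula.
The bounds `m z ≤ c * m x` and `p z ≤ c * p y` then add up to `l z ≤ c * l (x ⊓ y)`.

In a lattice-ordered group one would let `m` be the component of `l` on the band generated by
`(y - x)⁺`, that is `m s = ⨆ k, l (s ⊓ k • (y - x)⁺)`. Since
`s ⊓ k • (y - x)⁺ = (k • x + s) ⊓ k • y - k • (x ⊓ y)`, this makes sense in `S` once the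
subtraction is carried out after applying `l`.
-/

open scoped ENNReal

namespace InfDistrib

variable {S : Type*} [AddCommMonoid S] [SemilatticeInf S]

theorem add_inf (hdist : InfDistrib S) (a b c : S) : a + b ⊓ c = (a + b) ⊓ (a + c) := by
  rw [add_comm, ← hdist, add_comm b, add_comm c]

theorem le_inf_add_inf (hdist : InfDistrib S) {r a b c d : S} (hac : r ≤ a + c)
    (had : r ≤ a + d) (hbc : r ≤ b + c) (hbd : r ≤ b + d) : r ≤ a ⊓ b + c ⊓ d := by
  rw [← hdist, hdist.add_inf, hdist.add_inf]
  exact le_inf (le_inf hac had) (le_inf hbc hbd)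

theorem le_nsmul_inf_add (hdist : InfDistrib S) {x y r c : S} {m : ℕ}
    (h : ∀ i j : ℕ, i + j = m → r ≤ i • x + j • y + c) : r ≤ m • (x ⊓ y) + c := by
  induction m generalizing c with
  | zero => simpa using h 0 0 rfl
  | succ m ih =>
    rw [succ_nsmul, add_assoc]
    refine ih fun i j hij => ?_
    rw [add_left_comm, ← hdist]
    refine le_inf ((h (i + 1) j (by omega)).trans_eq ?_) ((h i (j + 1) (by omega)).trans_eq ?_)
    all_goals rw [succ_nsmul]; abel

theorem le_inf_add_inf_of_le_add [IsOrderedAddMonoid S] [IsBotZeroClass S]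
    (hdist : InfDistrib S) {r s t : S} (h : r ≤ s + t) : r ≤ r ⊓ s + r ⊓ t :=
  hdist.le_inf_add_inf (le_add_of_nonneg_right zero_le) (le_add_of_nonneg_right zero_le)
    (le_add_of_nonneg_left zero_le) h

-- The summand `k • (x ⊓ y)`, which cannot be cancelled in `S`, raises the degree to `k + k`, where
-- every `i • x + j • y` contains `k • x` or `k • y`.
theorem nsmul_inf_nsmul_add_nsmul_inf_le [IsOrderedAddMonoid S] (hdist : InfDistrib S)
    (x y : S) (k : ℕ) : k • x ⊓ k • y + k • (x ⊓ y) ≤ (k + k) • (x ⊓ y) := by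
  have nsmul_inf_le (i j : ℕ) : (i + j) • (x ⊓ y) ≤ i • x + j • y := by
    rw [add_nsmul]
    exact add_le_add (nsmul_le_nsmul_right inf_le_left i) (nsmul_le_nsmul_right inf_le_right j)
  rw [← add_zero ((k + k) • (x ⊓ y))]
  refine hdist.le_nsmul_inf_add fun i j hij => ?_
  rw [add_zero]
  rcases le_total k i with hki | hik
  · obtain ⟨d, rfl⟩ := Nat.exists_eq_add_of_le hki
    obtain rfl : k = d + j := by omega
    calc _ ≤ (d + j) • x + (d • x + j • y) := add_le_add inf_le_left (nsmul_inf_le d j)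
      _ = (d + j + d) • x + j • y := by rw [add_nsmul x (d + j), add_assoc]
  · obtain ⟨d, rfl⟩ := Nat.exists_eq_add_of_le (show k ≤ j by omega)
    obtain rfl : k = i + d := by omega
    calc _ ≤ (i + d) • y + (i • x + d • y) := add_le_add inf_le_right (nsmul_inf_le i d)
      _ = i • x + (i + d + d) • y := by rw [add_nsmul y (i + d), add_left_comm]

theorem map_nsmul_inf_nsmul_le [IsOrderedAddMonoid S] (hdist : InfDistrib S)
    (l : S →+o ℝ≥0∞) (x y : S) (k : ℕ) : l (k • x ⊓ k • y) ≤ l (k • (x ⊓ y)) := by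
  rcases eq_or_ne (l (k • (x ⊓ y))) ∞ with htop | hfin
  · exact htop ▸ le_top
  · rw [← ENNReal.add_le_add_iff_right hfin, ← map_add, ← map_add, ← add_nsmul]
    exact l.monotone' (hdist.nsmul_inf_nsmul_add_nsmul_inf_le x y k)

end InfDistrib

/-- The map `l - m` is order-preserving. The inequality `l r - m r ≤ l s - m s` is stated without
subtraction because the values may be infinite. -/
def MonotoneSub {S : Type*} [AddCommMonoid S] [PartialOrder S] (l m : S →+o ℝ≥0∞) : Prop :=
  ∀ ⦃r s : S⦄, r ≤ s → l r + m s ≤ l s + m r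

namespace MonotoneSub

section PartialOrder

variable {S : Type*} [AddCommMonoid S] [PartialOrder S] [IsBotZeroClass S] {l m : S →+o ℝ≥0∞}

theorem apply_le (h : MonotoneSub l m) (s : S) : m s ≤ l s := by
  simpa using h (zero_le (a := s))

theorem tsub_le_tsub (h : MonotoneSub l m) {r s : S} (hrs : r ≤ s) (hs : m s ≠ ∞) :
    l r - m r ≤ l s - m s := by
  have hr : m r ≠ ∞ := ne_top_of_le_ne_top hs (m.monotone' hrs)
  refine ENNReal.le_sub_of_add_le_right hs ?_
  rw [(ENNReal.cancel_of_ne hr).tsub_add_eq_add_tsub (h.apply_le r)]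
  exact tsub_le_iff_right.2 (h hrs)

theorem tsub_map_add (h : MonotoneSub l m) {r s : S} (hr : m r ≠ ∞) (hs : m s ≠ ∞) :
    l (r + s) - m (r + s) = (l r - m r) + (l s - m s) := by
  rw [map_add, map_add, (ENNReal.cancel_of_ne hr).tsub_add_tsub_comm (ENNReal.cancel_of_ne hs)
    (h.apply_le r) (h.apply_le s)]

end PartialOrder

variable {S : Type*} [AddCommMonoid S] [SemilatticeInf S] [IsOrderedAddMonoid S]
  [IsBotZeroClass S] {l m : S →+o ℝ≥0∞}

/-- The difference `l - m` as an additive order-preserving map. The supremum over the elements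
below `s` where `m` is finite avoids the junk value `∞ - ∞ = 0`. -/
noncomputable def residual (hdist : InfDistrib S) (h : MonotoneSub l m) : S →+o ℝ≥0∞ where
  toFun s := ⨆ r, ⨆ _ : r ≤ s ∧ m r ≠ ∞, l r - m r
  map_zero' := by
    refine nonpos_iff_eq_zero.1 (iSup₂_le fun r hr => ?_)
    calc l r - m r ≤ l 0 := tsub_le_self.trans (l.monotone' hr.1)
      _ = 0 := map_zero l
  map_add' s t := by
    refine le_antisymm (iSup₂_le fun r ⟨hr, hmr⟩ => ?_) ?_
    · have hmrs : m (r ⊓ s) ≠ ∞ := ne_top_of_le_ne_top hmr (m.monotone' inf_le_left)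
      have hmrt : m (r ⊓ t) ≠ ∞ := ne_top_of_le_ne_top hmr (m.monotone' inf_le_left)
      calc l r - m r ≤ l (r ⊓ s + r ⊓ t) - m (r ⊓ s + r ⊓ t) :=
            h.tsub_le_tsub (hdist.le_inf_add_inf_of_le_add hr)
              (map_add m _ _ ▸ ENNReal.add_ne_top.2 ⟨hmrs, hmrt⟩)
        _ = (l (r ⊓ s) - m (r ⊓ s)) + (l (r ⊓ t) - m (r ⊓ t)) := h.tsub_map_add hmrs hmrt
        _ ≤ _ := add_le_add (le_iSup₂_of_le _ ⟨inf_le_right, hmrs⟩ le_rfl)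
          (le_iSup₂_of_le _ ⟨inf_le_right, hmrt⟩ le_rfl)
    · have zero_mem (u : S) : ∃ r, r ≤ u ∧ m r ≠ ∞ := ⟨0, zero_le, by simp⟩
      refine ENNReal.biSup_add_biSup_le' (zero_mem s) (zero_mem t) fun r hr q hq => ?_
      rw [← h.tsub_map_add hr.2 hq.2]
      exact le_iSup₂_of_le (r + q) ⟨add_le_add hr.1 hq.1,
        map_add m _ _ ▸ ENNReal.add_ne_top.2 ⟨hr.2, hq.2⟩⟩ le_rfl
  monotone' _ _ hst := iSup₂_le fun r hr => le_iSup₂_of_le r ⟨hr.1.trans hst, hr.2⟩ le_rfl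

theorem residual_le_iff (hdist : InfDistrib S) (h : MonotoneSub l m) {s : S} {b : ℝ≥0∞} :
    h.residual hdist s ≤ b ↔ ∀ r ≤ s, m r ≠ ∞ → l r - m r ≤ b :=
  iSup₂_le_iff.trans (by simp only [and_imp])

theorem add_residual (hdist : InfDistrib S) (h : MonotoneSub l m) (s : S) :
    m s + h.residual hdist s = l s := by
  rcases eq_or_ne (m s) ∞ with htop | hfin
  · rw [htop, top_add, eq_comm, ← top_le_iff, ← htop]
    exact h.apply_le s
  · have residual_eq : h.residual hdist s = l s - m s :=
      le_antisymm ((h.residual_le_iff hdist).2 fun r hr _ => h.tsub_le_tsub hr hfin)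
        ((h.residual_le_iff hdist).1 le_rfl s le_rfl hfin)
    rw [residual_eq, add_tsub_cancel_of_le (h.apply_le s)]

end MonotoneSub

theorem map_nsmul_ne_top {M F : Type*} [AddMonoid M] [FunLike F M ℝ≥0∞]
    [AddMonoidHomClass F M ℝ≥0∞] {f : F} {a : M} (ha : f a ≠ ∞) (k : ℕ) : f (k • a) ≠ ∞ := by
  rw [map_nsmul, nsmul_eq_mul]
  exact ENNReal.mul_ne_top (ENNReal.natCast_ne_top k) ha

/-- The `k`-th approximation to the band component of `l`. In a lattice-ordered group this is
`l (s ⊓ k • (y - x)⁺)`. -/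
noncomputable def bandApprox {S : Type*} [AddCommMonoid S] [SemilatticeInf S]
    (l : S →+o ℝ≥0∞) (x y : S) (k : ℕ) (s : S) : ℝ≥0∞ :=
  l ((k • x + s) ⊓ k • y) - l (k • (x ⊓ y))

section BandApprox

variable {S : Type*} [AddCommMonoid S] [SemilatticeInf S] [IsOrderedAddMonoid S]
  {l : S →+o ℝ≥0∞} {x y : S}

theorem bandApprox_zero_right (hdist : InfDistrib S) (k : ℕ) : bandApprox l x y k 0 = 0 := by
  rw [bandApprox, add_zero]
  exact tsub_eq_zero_of_le (hdist.map_nsmul_inf_nsmul_le l x y k)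

theorem bandApprox_mono (k : ℕ) : Monotone (bandApprox l x y k) := fun _ _ hst =>
  tsub_le_tsub_right (l.monotone' (inf_le_inf_right _ (add_le_add_right hst _))) _

variable [IsBotZeroClass S]

theorem bandApprox_add_map_nsmul_inf (k : ℕ) (s : S) :
    bandApprox l x y k s + l (k • (x ⊓ y)) = l ((k • x + s) ⊓ k • y) := by
  refine tsub_add_cancel_of_le (l.monotone' (le_inf ?_ (nsmul_le_nsmul_right inf_le_right k)))
  exact (nsmul_le_nsmul_right inf_le_left k).trans (le_add_of_nonneg_right zero_le)

theorem bandApprox_add_bandApprox_le (hxy : l (x ⊓ y) ≠ ∞) (j k : ℕ) (s t : S) :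
    bandApprox l x y j s + bandApprox l x y k t ≤ bandApprox l x y (j + k) (s + t) := by
  rw [← ENNReal.add_le_add_iff_right (map_nsmul_ne_top hxy (j + k)),
    bandApprox_add_map_nsmul_inf, add_nsmul (x ⊓ y), map_add, add_add_add_comm,
    bandApprox_add_map_nsmul_inf, bandApprox_add_map_nsmul_inf, ← map_add]
  refine l.monotone' (le_inf ?_ ?_)
  · calc _ ≤ (j • x + s) + (k • x + t) := add_le_add inf_le_left inf_le_left
      _ = (j + k) • x + (s + t) := by rw [add_nsmul, add_add_add_comm]
  · calc _ ≤ j • y + k • y := add_le_add inf_le_right inf_le_right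
      _ = (j + k) • y := (add_nsmul y j k).symm

theorem nsmul_add_add_inf_add_nsmul_inf_le (hdist : InfDistrib S) (k : ℕ) (s t : S) :
    (k • x + (s + t)) ⊓ k • y + k • (x ⊓ y) ≤
      (k • x + s) ⊓ k • y + (k • x + t) ⊓ k • y := by
  have hx : k • (x ⊓ y) ≤ k • x := nsmul_le_nsmul_right inf_le_left k
  have hy : k • (x ⊓ y) ≤ k • y := nsmul_le_nsmul_right inf_le_right k
  refine hdist.le_inf_add_inf ?_ ?_ ?_ ?_
  · exact (add_le_add inf_le_left hx).trans_eq (by abel)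
  · rw [add_comm (k • x + s)]
    exact add_le_add inf_le_right (hx.trans (le_add_of_nonneg_right zero_le))
  · exact add_le_add inf_le_right (hx.trans (le_add_of_nonneg_right zero_le))
  · exact add_le_add inf_le_right hy

theorem bandApprox_add_le (hdist : InfDistrib S) (hxy : l (x ⊓ y) ≠ ∞) (k : ℕ) (s t : S) :
    bandApprox l x y k (s + t) ≤ bandApprox l x y k s + bandApprox l x y k t := by
  have hk := map_nsmul_ne_top hxy k
  rw [← ENNReal.add_le_add_iff_right (ENNReal.add_ne_top.2 ⟨hk, hk⟩),
    add_add_add_comm (bandApprox l x y k s), ← add_assoc]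
  simp only [bandApprox_add_map_nsmul_inf, ← map_add]
  exact l.monotone' (nsmul_add_add_inf_add_nsmul_inf_le hdist k s t)

theorem map_add_bandApprox_le (hdist : InfDistrib S) (hxy : l (x ⊓ y) ≠ ∞) (k : ℕ) {r s : S}
    (hrs : r ≤ s) : l r + bandApprox l x y k s ≤ l s + bandApprox l x y k r := by
  rw [← ENNReal.add_le_add_iff_right (map_nsmul_ne_top hxy k), add_assoc, add_assoc]
  simp only [bandApprox_add_map_nsmul_inf, ← map_add, hdist.add_inf]
  have swap_eq : r + (k • x + s) = s + (k • x + r) := by abel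
  exact l.monotone' (inf_le_inf swap_eq.le (add_le_add_left hrs _))

theorem bandApprox_left_add_map_le (hxy : l (x ⊓ y) ≠ ∞) (k : ℕ) {r : S} (hr : r ≤ y) :
    bandApprox l x y k x + l r ≤ l (x ⊓ y) + bandApprox l x y (k + 1) r := by
  have add_bandApprox_succ : l (x ⊓ y) + bandApprox l x y (k + 1) r + l (k • (x ⊓ y)) =
      l (((k + 1) • x + r) ⊓ (k + 1) • y) := by
    rw [add_right_comm, ← map_add, ← succ_nsmul', add_comm, bandApprox_add_map_nsmul_inf]
  rw [← ENNReal.add_le_add_iff_right (map_nsmul_ne_top hxy k), add_right_comm,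
    bandApprox_add_map_nsmul_inf, add_bandApprox_succ, ← map_add]
  simp only [succ_nsmul]
  exact l.monotone' (le_inf (add_le_add_left inf_le_left r) (add_le_add inf_le_right hr))

/-- The part of `l` living where `x` is smaller than `y`. In a lattice-ordered group this is the
component of `l` on the band generated by `(y - x)⁺`. -/
noncomputable def bandComponent (hdist : InfDistrib S) (hxy : l (x ⊓ y) ≠ ∞) : S →+o ℝ≥0∞ where
  toFun s := ⨆ k, bandApprox l x y k s
  map_zero' := by simp only [bandApprox_zero_right hdist, ciSup_const]
  map_add' s t := by
    apply le_antisymm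
    · exact iSup_le fun k => (bandApprox_add_le hdist hxy k s t).trans
        (add_le_add (le_iSup (bandApprox l x y · s) k) (le_iSup (bandApprox l x y · t) k))
    · exact ENNReal.iSup_add_iSup_le fun j k => (bandApprox_add_bandApprox_le hxy j k s t).trans
        (le_iSup (bandApprox l x y · (s + t)) (j + k))
  monotone' _ _ hst := iSup_mono fun k => bandApprox_mono k hst

theorem bandApprox_le_bandComponent (hdist : InfDistrib S) (hxy : l (x ⊓ y) ≠ ∞) (k : ℕ) (s : S) :
    bandApprox l x y k s ≤ bandComponent hdist hxy s :=
  le_iSup (bandApprox l x y · s) k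

theorem monotoneSub_bandComponent (hdist : InfDistrib S) (hxy : l (x ⊓ y) ≠ ∞) :
    MonotoneSub l (bandComponent hdist hxy) := fun r s hrs => by
  change l r + ⨆ k, bandApprox l x y k s ≤ _
  rw [ENNReal.add_iSup]
  exact iSup_le fun k => (map_add_bandApprox_le hdist hxy k hrs).trans
    (add_le_add_right (bandApprox_le_bandComponent hdist hxy k r) _)

theorem bandComponent_left_add_map_le (hdist : InfDistrib S) (hxy : l (x ⊓ y) ≠ ∞) {r : S}
    (hr : r ≤ y) : bandComponent hdist hxy x + l r ≤ l (x ⊓ y) + bandComponent hdist hxy r := by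
  change (⨆ k, bandApprox l x y k x) + l r ≤ _
  rw [ENNReal.iSup_add]
  exact iSup_le fun k => (bandApprox_left_add_map_le hxy k hr).trans
    (add_le_add_right (bandApprox_le_bandComponent hdist hxy (k + 1) r) _)

theorem bandComponent_add_residual_le (hdist : InfDistrib S) (hxy : l (x ⊓ y) ≠ ∞) :
    bandComponent hdist hxy x + (monotoneSub_bandComponent hdist hxy).residual hdist y ≤
      l (x ⊓ y) := by
  have hle : bandComponent hdist hxy x ≤ l (x ⊓ y) := by
    simpa using bandComponent_left_add_map_le hdist hxy (zero_le (a := y))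
  have hfin : bandComponent hdist hxy x ≠ ∞ := ne_top_of_le_ne_top hxy hle
  have residual_le : (monotoneSub_bandComponent hdist hxy).residual hdist y ≤
      l (x ⊓ y) - bandComponent hdist hxy x := by
    refine (MonotoneSub.residual_le_iff hdist _).2 fun r hr _ => tsub_le_iff_right.2 ?_
    rw [(ENNReal.cancel_of_ne hfin).tsub_add_eq_add_tsub hle]
    exact ENNReal.le_sub_of_add_le_left hfin (bandComponent_left_add_map_le hdist hxy hr)
  calc _ ≤ bandComponent hdist hxy x + (l (x ⊓ y) - bandComponent hdist hxy x) :=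
        add_le_add_right residual_le _
    _ = l (x ⊓ y) := add_tsub_cancel_of_le hle

theorem exists_add_eq_and_add_le_map_inf (hdist : InfDistrib S) (hxy : l (x ⊓ y) ≠ ∞) :
    ∃ m p : S →+o ℝ≥0∞, (∀ s, m s + p s = l s) ∧ m x + p y ≤ l (x ⊓ y) :=
  ⟨bandComponent hdist hxy, _, (monotoneSub_bandComponent hdist hxy).add_residual hdist,
    bandComponent_add_residual_le hdist hxy⟩

end BandApprox

namespace WayBelow

variable {S : Type*} [PartialOrder S] {x y z : S}

theorem le (h : WayBelow x y) : x ≤ y :=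
  (h (fun _ => y) monotone_const y (by simp) le_rfl).choose_spec

theorem trans_le (h : WayBelow x y) (hyz : y ≤ z) : WayBelow x z :=
  fun f hf s hs hzs => h f hf s hs (hyz.trans hzs)

theorem trans_le' (h : WayBelow y z) (hxy : x ≤ y) : WayBelow x z :=
  fun f hf s hs hzs => (h f hf s hs hzs).imp fun _ => hxy.trans

theorem monotone_of_succ {f : ℕ → S} (h : ∀ n, WayBelow (f n) (f (n + 1))) : Monotone f :=
  monotone_nat_of_le_succ fun n => (h n).le

theorem of_succ_of_isLUB {f : ℕ → S} (h : ∀ n, WayBelow (f n) (f (n + 1)))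
    (hx : IsLUB (Set.range f) x) (n : ℕ) : WayBelow (f n) x :=
  (h n).trans_le (hx.1 ⟨n + 1, rfl⟩)

end WayBelow

section Regularization

variable {S : Type*} [AddCommMonoid S] [PartialOrder S]

/-- The largest functional below `l`: on a Cu-semigroup, approximation from way below restores
preservation of suprema of increasing sequences. -/
noncomputable def regularization (l : S →+o ℝ≥0∞) (s : S) : ℝ≥0∞ :=
  ⨆ r, ⨆ _ : WayBelow r s, l r

theorem le_regularization (l : S →+o ℝ≥0∞) {r s : S} (h : WayBelow r s) :
    l r ≤ regularization l s :=
  le_iSup₂_of_le r h le_rfl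

theorem regularization_le (l : S →+o ℝ≥0∞) (s : S) : regularization l s ≤ l s :=
  iSup₂_le fun _ hr => l.monotone' hr.le

theorem regularization_mono (l : S →+o ℝ≥0∞) : Monotone (regularization l) :=
  fun _ _ hst => iSup₂_le fun _ hr => le_regularization l (hr.trans_le hst)

variable [CuSemigroup S]

instance CuSemigroup.isOrderedAddMonoid : IsOrderedAddMonoid S where
  add_le_add_left _ _ h _ := CuSemigroup.add_le_add h le_rfl

instance CuSemigroup.isBotZeroClass : IsBotZeroClass S where
  isBot_zero := CuSemigroup.zero_le

theorem CuSemigroup.zero_wayBelow (x : S) : WayBelow 0 x :=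
  fun _ _ _ _ _ => ⟨0, CuSemigroup.zero_le _⟩

theorem CuSemigroup.exists_wayBelow_add_of_wayBelow_add {r x y : S} (h : WayBelow r (x + y)) :
    ∃ x' y', WayBelow x' x ∧ WayBelow y' y ∧ r ≤ x' + y' := by
  obtain ⟨f, hf, hfx⟩ := CuSemigroup.O2 x
  obtain ⟨g, hg, hgy⟩ := CuSemigroup.O2 y
  have hf_mono := WayBelow.monotone_of_succ hf
  have hg_mono := WayBelow.monotone_of_succ hg
  obtain ⟨n, hn⟩ := h _ (hf_mono.add hg_mono) _ (CuSemigroup.O4 f g hf_mono hg_mono x y hfx hgy)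
    le_rfl
  exact ⟨f n, g n, .of_succ_of_isLUB hf hfx n, .of_succ_of_isLUB hg hgy n, hn⟩

theorem CuSemigroup.exists_wayBelow_wayBelow {r s : S} (h : WayBelow r s) :
    ∃ t, WayBelow r t ∧ WayBelow t s := by
  obtain ⟨f, hf, hfs⟩ := CuSemigroup.O2 s
  obtain ⟨n, hn⟩ := h f (WayBelow.monotone_of_succ hf) s hfs le_rfl
  exact ⟨f (n + 1), (hf n).trans_le' hn, .of_succ_of_isLUB hf hfs (n + 1)⟩

theorem regularization_add (l : S →+o ℝ≥0∞) (x y : S) :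
    regularization l (x + y) = regularization l x + regularization l y := by
  refine le_antisymm (iSup₂_le fun r hr => ?_) ?_
  · obtain ⟨x', y', hx', hy', hrxy⟩ := CuSemigroup.exists_wayBelow_add_of_wayBelow_add hr
    calc l r ≤ l (x' + y') := l.monotone' hrxy
      _ = l x' + l y' := map_add l x' y'
      _ ≤ _ := add_le_add (le_regularization l hx') (le_regularization l hy')
  · refine ENNReal.biSup_add_biSup_le' ⟨0, CuSemigroup.zero_wayBelow x⟩
      ⟨0, CuSemigroup.zero_wayBelow y⟩ fun x' hx' y' hy' => ?_
    rw [← map_add]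
    exact le_regularization l (CuSemigroup.O3 hx' hy')

theorem regularization_eq_iSup (l : S →+o ℝ≥0∞) {f : ℕ → S} {s : S} (hf : Monotone f)
    (hs : IsLUB (Set.range f) s) : regularization l s = ⨆ n, regularization l (f n) := by
  refine le_antisymm (iSup₂_le fun r hr => ?_)
    (iSup_le fun n => regularization_mono l (hs.1 ⟨n, rfl⟩))
  obtain ⟨t, hrt, hts⟩ := CuSemigroup.exists_wayBelow_wayBelow hr
  obtain ⟨n, hn⟩ := hts f hf s hs le_rfl
  exact le_iSup_of_le n (le_regularization l (hrt.trans_le hn))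

theorem isFunctional_regularization (l : S →+o ℝ≥0∞) : IsFunctional (regularization l) :=
  ⟨nonpos_iff_eq_zero.1 ((regularization_le l 0).trans_eq (map_zero l)), regularization_add l,
    fun _ _ hxy => regularization_mono l hxy, fun _ _ hf hs => regularization_eq_iSup l hf hs⟩

theorem map_le_mul_of_wayBelow {x z z' : S} {c : ℝ≥0∞}
    (h : ∀ lam : S → ℝ≥0∞, IsFunctional lam → lam z ≤ c * lam x) (hz : WayBelow z' z)
    (l : S →+o ℝ≥0∞) : l z' ≤ c * l x :=
  calc l z' ≤ regularization l z := le_regularization l hz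
    _ ≤ c * regularization l x := h _ (isFunctional_regularization l)
    _ ≤ c * l x := by gcongr; exact regularization_le l x

end Regularization

namespace IsFunctional

variable {S : Type*} [AddCommMonoid S] [PartialOrder S] {lam : S → ℝ≥0∞}

/-- A functional as a bundled additive order-preserving map, forgetting the preservation of
suprema. -/
def toOrderAddMonoidHom (hlam : IsFunctional lam) : S →+o ℝ≥0∞ where
  toFun := lam
  map_zero' := hlam.1
  map_add' := hlam.2.1
  monotone' := hlam.2.2.1

theorem le_of_forall_wayBelow [CuSemigroup S] (hlam : IsFunctional lam) {z : S} {b : ℝ≥0∞}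
    (h : ∀ z', WayBelow z' z → lam z' ≤ b) : lam z ≤ b := by
  obtain ⟨f, hf, hz⟩ := CuSemigroup.O2 z
  rw [hlam.2.2.2 f z (WayBelow.monotone_of_succ hf) hz]
  exact iSup_le fun n => h _ (.of_succ_of_isLUB hf hz n)

end IsFunctional

theorem functional_le_nsmul_inf_general {S : Type*} [AddCommMonoid S] [SemilatticeInf S]
    [CuSemigroup S] (hdist : InfDistrib S) (x y z : S) (c : ℝ≥0∞)
    (h : ∀ lam : S → ℝ≥0∞, IsFunctional lam → lam z ≤ c * lam x ∧ lam z ≤ c * lam y) :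
    ∀ lam : S → ℝ≥0∞, IsFunctional lam → lam z ≤ c * lam (x ⊓ y) := by
  intro lam hlam
  rcases eq_or_ne c 0 with rfl | hc
  · simpa using (h lam hlam).1
  rcases eq_or_ne (lam (x ⊓ y)) ∞ with htop | hfin
  · rw [htop, ENNReal.mul_top hc]
    exact le_top
  obtain ⟨m, p, add_eq, add_le⟩ :=
    exists_add_eq_and_add_le_map_inf (l := hlam.toOrderAddMonoidHom) hdist hfin
  refine hlam.le_of_forall_wayBelow fun z' hz => ?_
  calc lam z' = m z' + p z' := (add_eq z').symm
    _ ≤ c * m x + c * p y :=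
      add_le_add (map_le_mul_of_wayBelow (fun μ hμ => (h μ hμ).1) hz m)
        (map_le_mul_of_wayBelow (fun μ hμ => (h μ hμ).2) hz p)
    _ = c * (m x + p y) := (mul_add c _ _).symm
    _ ≤ c * lam (x ⊓ y) := by gcongr; exact add_le

/-- In a countably based, inf-semilattice ordered Cu-semigroup with (O5), the rank map
preserves binary infima: if `λ(z) ≤ n·λ(x)` and `λ(z) ≤ n·λ(y)` for every functional
`λ`, then `λ(z) ≤ n·λ(x ⊓ y)` for every functional `λ`. -/
theorem functional_le_nsmul_inf {S : Type*} [AddCommMonoid S] [SemilatticeInf S]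
    [CuSemigroup S] (hcb : CountablyBased S) (h5 : O5 S) (hdist : InfDistrib S)
    (x y z : S) (n : ℕ) (hn : 1 ≤ n)
    (h : ∀ lam : S → ENNReal, IsFunctional lam →
      lam z ≤ n * lam x ∧ lam z ≤ n * lam y) :
    ∀ lam : S → ENNReal, IsFunctional lam → lam z ≤ n * lam (x ⊓ y) :=
  functional_le_nsmul_inf_general hdist x y z n h
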